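/- Let n ≥ 3 be an integer and let h, s be real numbers with 0 < h ≤ s/2. Set c = (h^n / s)^{1/(n−1)}. Then 0 < c < h, and 2c + (2(n−1)/s)·(1/(2n))·( c² − (n/(n−2))·h² + (2/(n−2))·h^n·c^{2−n} ) ≤ 8·(h^n/s)^{1/(n−1)}. -/

import Mathlib

/-- The final quantitative computation in the proof of the Abresch–Gromoll
excess estimate: for an integer `n ≥ 3` and reals `0 < h ≤ s/2`, setting
`c = (hⁿ/s)^{1/(n-1)}` one has `0 < c < h` and
`2c + (2(n-1)/s)(1/(2n))(c² - (n/(n-2))h² + (2/(n-2))hⁿ c^{2-n}) ≤ 8 (hⁿ/s)^{1/(n-1)}`. -/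
theorem abresch_gromoll_final_estimate (n : ℕ) (hn : 3 ≤ n)
    (h s : ℝ) (hh : 0 < h) (hhs : h ≤ s / 2) :
    0 < (h ^ n / s) ^ ((1 : ℝ) / ((n : ℝ) - 1)) ∧
    (h ^ n / s) ^ ((1 : ℝ) / ((n : ℝ) - 1)) < h ∧
    2 * (h ^ n / s) ^ ((1 : ℝ) / ((n : ℝ) - 1)) +
      (2 * ((n : ℝ) - 1) / s) * (1 / (2 * (n : ℝ))) *
        (((h ^ n / s) ^ ((1 : ℝ) / ((n : ℝ) - 1))) ^ 2 -
          ((n : ℝ) / ((n : ℝ) - 2)) * h ^ 2 +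
          (2 / ((n : ℝ) - 2)) * h ^ n *
            ((h ^ n / s) ^ ((1 : ℝ) / ((n : ℝ) - 1))) ^ ((2 : ℝ) - (n : ℝ)))
      ≤ 8 * (h ^ n / s) ^ ((1 : ℝ) / ((n : ℝ) - 1)) := by
  have hs : 0 < s := by linarith
  have hn3 : (3 : ℝ) ≤ n := by exact_mod_cast hn
  have hx : 0 < h ^ n / s := by positivity
  have hc0 : 0 < (h ^ n / s) ^ ((1 : ℝ) / ((n : ℝ) - 1)) := Real.rpow_pos_of_pos hx _
  have hcn : ((h ^ n / s) ^ ((1 : ℝ) / ((n : ℝ) - 1))) ^ ((n : ℝ) - 1) = h ^ n / s := by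
    rw [← Real.rpow_mul hx.le, one_div, inv_mul_cancel₀ (by linarith), Real.rpow_one]
  generalize (h ^ n / s) ^ ((1 : ℝ) / ((n : ℝ) - 1)) = c at hc0 hcn ⊢
  have hlt : c < h := by
    by_contra hle
    have h1 := Real.rpow_le_rpow hh.le (not_lt.mp hle) (show (0 : ℝ) ≤ (n : ℝ) - 1 by linarith)
    rw [hcn, Real.rpow_sub_one hh.ne', Real.rpow_natCast] at h1
    have h2 : h ^ n / s < h ^ n / h :=
      div_lt_div_of_pos_left (by positivity) hh (by linarith)
    linarith
  have key : h ^ n * c ^ ((2 : ℝ) - (n : ℝ)) = s * c := by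
    have h1 : h ^ n = s * c ^ ((n : ℝ) - 1) := by rw [hcn]; field_simp
    rw [h1, mul_assoc, ← Real.rpow_add hc0]
    norm_num
  refine ⟨hc0, hlt, ?_⟩
  rw [mul_assoc (2 / ((n : ℝ) - 2)), key]
  generalize (n : ℝ) = x at hn3
  have hx2 : 0 < x - 2 := by linarith
  have hsq : c ^ 2 - x / (x - 2) * h ^ 2 ≤ 0 := by
    have h1 : 1 ≤ x / (x - 2) := by rw [le_div_iff₀ hx2]; linarith
    nlinarith [pow_le_pow_left₀ hc0.le hlt.le 2, sq_nonneg h]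
  have hA : 0 ≤ 2 * (x - 1) / s * (1 / (2 * x)) := by
    have : 0 ≤ x - 1 := by linarith
    positivity
  have h3 : 2 * (x - 1) / s * (1 / (2 * x)) * (2 / (x - 2) * (s * c)) ≤ 6 * c := by
    have h4 : 2 * (x - 1) / s * (1 / (2 * x)) * (2 / (x - 2) * (s * c))
        = (2 * (x - 1) / (x * (x - 2))) * c := by
      have : x ≠ 0 := by linarith
      have := hx2.ne'
      field_simp
    rw [h4]
    apply mul_le_mul_of_nonneg_right _ hc0.le
    rw [div_le_iff₀ (by nlinarith)]
    nlinarith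
  have h5 := mul_nonpos_of_nonneg_of_nonpos hA hsq
  rw [mul_add]
  linarith
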